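/- arXiv:math/0702142 — 2 statements merged into one kernel-verified Lean document; each statement's English description precedes it below -/
import Mathlib

section
/- Let R be an integrally closed integral domain with quotient field K and X an indeterminate over R. Let *_X denote the operation on R[X] defined by E^{*_X} = ⋃{(EJ : J) : J a nonzero finitely generated fractional ideal of R[X]} and *_R the operation on R defined by E^{*_R} = ⋃{(EJ : J) : J a nonzero finitely generated fractional ideal of R}, where in each case (EJ : J) = {x : xJ ⊆ EJ} inside the respective quotient field. Then for every nonzero fractional ideal I of R, (I[X])^{*_X} = I^{*_R}[X], where I[X] denotes the R[X]-submodule of K(X) generated by I. -/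
open Pointwise

/-- A *semistar operation* on a domain `S` with quotient field `M`. -/
structure IsSemistarOperation (S M : Type*) [CommRing S] [Field M] [Algebra S M]
    (star : Submodule S M → Submodule S M) : Prop where
  smul_eq : ∀ a : M, a ≠ 0 → ∀ E : Submodule S M, E ≠ ⊥ → star (a • E) = a • star E
  le_star : ∀ E : Submodule S M, E ≠ ⊥ → E ≤ star E
  mono : ∀ E F : Submodule S M, E ≠ ⊥ → F ≠ ⊥ → E ≤ F → star E ≤ star F
  idem : ∀ E : Submodule S M, E ≠ ⊥ → star (star E) = star E

/-- A semistar operation has *finite character* if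
`E^* = ⋃ {F^* : F nonzero finitely generated, F ⊆ E}`. -/
def SemistarFiniteCharacter (S M : Type*) [CommRing S] [Field M] [Algebra S M]
    (star : Submodule S M → Submodule S M) : Prop :=
  ∀ E : Submodule S M, E ≠ ⊥ → ∀ x : M,
    x ∈ star E ↔ ∃ F : Submodule S M, F ≠ ⊥ ∧ F.FG ∧ F ≤ E ∧ x ∈ star F

/-- The set `E^* = ⋃ {(EJ : J) : J a nonzero finitely generated fractional ideal of S}`,
where `(EJ : J) = {x : xJ ⊆ EJ}`. -/
def bStarSet {S M : Type*} [CommRing S] [Field M] [Algebra S M] (E : Submodule S M) : Set M :=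
  ⋃ J ∈ {J : Submodule S M | J ≠ ⊥ ∧ J.FG ∧ IsFractional (nonZeroDivisors S) J},
    (((E * J) / J : Submodule S M) : Set M)

variable {R K : Type*} [CommRing R] [IsDomain R] [Field K] [Algebra R K] [IsFractionRing R K]

open Polynomial

variable {L : Type*} [Field L] [Algebra R[X] L] [IsFractionRing R[X] L]

/-- The content of a polynomial as an `S`-submodule of the coefficient ring. -/
def cont11 (S : Type*) {M : Type*} [CommRing S] [CommRing M] [Algebra S M] (f : M[X]) :
    Submodule S M :=
  Submodule.span S (Set.range f.coeff)

theorem coeff_mem_cont11 (S : Type*) {M : Type*} [CommRing S] [CommRing M] [Algebra S M]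
    (f : M[X]) (i : ℕ) : f.coeff i ∈ cont11 S f :=
  Submodule.subset_span ⟨i, rfl⟩

theorem cont11_le {S M : Type*} [CommRing S] [CommRing M] [Algebra S M]
    {f : M[X]} {N : Submodule S M} : cont11 S f ≤ N ↔ ∀ i, f.coeff i ∈ N := by
  rw [cont11, Submodule.span_le]
  constructor
  · intro h i
    exact h ⟨i, rfl⟩
  · rintro h _ ⟨i, rfl⟩
    exact h i

theorem cont11_fg (S : Type*) {M : Type*} [CommRing S] [CommRing M] [Algebra S M]
    (f : M[X]) : (cont11 S f).FG := by
  classical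
  have hf : (Set.range f.coeff).Finite := by
    refine Set.Finite.subset ((f.support.image f.coeff).finite_toSet.union
      (Set.finite_singleton 0)) ?_
    rintro _ ⟨i, rfl⟩
    by_cases h : f.coeff i = 0
    · right; simpa using h
    · left
      simp only [Finset.coe_image, Set.mem_image, Finset.mem_coe, mem_support_iff]
      exact ⟨i, h, rfl⟩
  exact Submodule.fg_span hf

theorem cont11_ne_bot (S : Type*) {M : Type*} [CommRing S] [CommRing M] [Algebra S M]
    {f : M[X]} (hf : f ≠ 0) : cont11 S f ≠ ⊥ := by
  intro h
  apply hf
  ext i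
  have := coeff_mem_cont11 S f i
  rw [h] at this
  simpa using this

theorem sup_pow_le11 {S M : Type*} [CommRing S] [CommRing M] [Algebra S M]
    (P Q T : Submodule S M) (hP : T ≤ P ⊔ Q) (hPT : P ≤ T) (k : ℕ) :
    T ^ (k + 1) ≤ P ^ (k + 1) ⊔ Q * T ^ k := by
  induction k with
  | zero => simpa using hP
  | succ k ih =>
    calc T ^ (k + 1 + 1) = T * T ^ (k + 1) := pow_succ' _ _
      _ ≤ (P ⊔ Q) * T ^ (k + 1) := mul_le_mul' hP le_rfl
      _ = P * T ^ (k + 1) ⊔ Q * T ^ (k + 1) := Submodule.sup_mul _ _ _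
      _ ≤ P * (P ^ (k + 1) ⊔ Q * T ^ k) ⊔ Q * T ^ (k + 1) :=
          sup_le_sup_right (mul_le_mul' le_rfl ih) _
      _ = P ^ (k + 1 + 1) ⊔ Q * (P * T ^ k) ⊔ Q * T ^ (k + 1) := by
          rw [Submodule.mul_sup, ← pow_succ', mul_left_comm]
      _ ≤ P ^ (k + 1 + 1) ⊔ Q * T ^ (k + 1) := by
          refine sup_le (sup_le le_sup_left ?_) le_sup_right
          refine le_sup_of_le_right (mul_le_mul' le_rfl ?_)
          rw [pow_succ']
          exact mul_le_mul' hPT le_rfl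

/-- A form of the Dedekind–Mertens lemma. -/
theorem dedekind_mertens11 {S M : Type*} [CommRing S] [CommRing M] [Algebra S M] (n : ℕ) :
    ∀ (m : ℕ) (f g : M[X]), (∀ i, m ≤ i → f.coeff i = 0) → (∀ i, n ≤ i → g.coeff i = 0) →
      cont11 S f ^ (n + 1) * cont11 S g ≤ cont11 S f ^ n * cont11 S (f * g) := by
  induction n with
  | zero =>
    intro m f g _ hg
    have hg0 : cont11 S g = ⊥ := by
      rw [eq_bot_iff, cont11_le]
      intro i
      simp [hg i (Nat.zero_le _)]
    rw [hg0]
    simp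
  | succ n ihn =>
    intro m
    induction m with
    | zero =>
      intro f g hf _
      have hf0 : cont11 S f = ⊥ := by
        rw [eq_bot_iff, cont11_le]
        intro i
        simp [hf i (Nat.zero_le _)]
      rw [hf0]
      simp
    | succ m ihm =>
      intro f g hf hg
      set a := f.coeff m with ha
      set b := g.coeff n with hb
      set f' := f - C a * X ^ m with hf'
      set g' := g - C b * X ^ n with hg'
      set P := cont11 S f with hP
      set P' := cont11 S f' with hP'
      set B := cont11 S (f * g) with hB
      set Q := Submodule.span S {a} with hQ
      have cf' : ∀ i, f'.coeff i = if i = m then 0 else f.coeff i := by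
        intro i
        rw [hf', coeff_sub, coeff_C_mul_X_pow]
        split_ifs with h
        · rw [h, ha, sub_self]
        · rw [sub_zero]
      have cg' : ∀ i, g'.coeff i = if i = n then 0 else g.coeff i := by
        intro i
        rw [hg', coeff_sub, coeff_C_mul_X_pow]
        split_ifs with h
        · rw [h, hb, sub_self]
        · rw [sub_zero]
      have hf'0 : ∀ i, m ≤ i → f'.coeff i = 0 := by
        intro i hi
        rw [cf']
        split_ifs with h
        · rfl
        · exact hf i (by omega)
      have hg'0 : ∀ i, n ≤ i → g'.coeff i = 0 := by
        intro i hi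
        rw [cg']
        split_ifs with h
        · rfl
        · exact hg i (by omega)
      have haP : a ∈ P := coeff_mem_cont11 S f m
      have hQP : Q ≤ P := by
        rw [hQ, Submodule.span_singleton_le_iff_mem]
        exact haP
      have hP'P : P' ≤ P := by
        rw [hP', cont11_le]
        intro i
        rw [cf']
        split_ifs
        · exact zero_mem _
        · exact coeff_mem_cont11 S f i
      have hPP' : P ≤ P' ⊔ Q := by
        rw [hP, cont11_le]
        intro i
        by_cases h : i = m
        · rw [h]
          exact Submodule.mem_sup_right (Submodule.mem_span_singleton_self _)
        · have : f.coeff i = f'.coeff i := by rw [cf', if_neg h]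
          rw [this]
          exact Submodule.mem_sup_left (coeff_mem_cont11 S f' i)
      have hgg' : cont11 S g ≤ cont11 S g' ⊔ Submodule.span S {b} := by
        rw [cont11_le]
        intro i
        by_cases h : i = n
        · rw [h]
          exact Submodule.mem_sup_right (Submodule.mem_span_singleton_self _)
        · have : g.coeff i = g'.coeff i := by rw [cg', if_neg h]
          rw [this]
          exact Submodule.mem_sup_left (coeff_mem_cont11 S g' i)
      have habB : a * b ∈ B := by
        have h : (f * g).coeff (m + n) = f.coeff m * g.coeff n := by
          apply coeff_mul_add_eq_of_natDegree_le
          · rw [natDegree_le_iff_coeff_eq_zero]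
            intro i hi
            exact hf i hi
          · rw [natDegree_le_iff_coeff_eq_zero]
            intro i hi
            exact hg i hi
        rw [ha, hb, ← h]
        exact coeff_mem_cont11 S _ _
      have h1 : Q * cont11 S (f * g') ≤ P * B := by
        rw [hQ, cont11, Submodule.span_mul_span, Submodule.span_le]
        rintro _ ⟨_, rfl, _, ⟨i, rfl⟩, rfl⟩
        have e : f * g' = f * g - C b * (f * X ^ n) := by rw [hg']; ring
        simp only [SetLike.mem_coe]
        rw [e, coeff_sub, mul_sub, coeff_C_mul, coeff_mul_X_pow']
        refine sub_mem (Submodule.mul_mem_mul haP (coeff_mem_cont11 S _ _)) ?_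
        split_ifs
        · rw [← mul_assoc, mul_comm P]
          exact Submodule.mul_mem_mul habB (coeff_mem_cont11 S _ _)
        · simp
      have h2 : Q * (P ^ (n + 1) * cont11 S g) ≤ P ^ (n + 1) * B := by
        refine (mul_le_mul' le_rfl (mul_le_mul' le_rfl hgg')).trans ?_
        rw [Submodule.mul_sup, Submodule.mul_sup]
        refine sup_le ?_ ?_
        · refine (mul_le_mul' le_rfl (ihn (m + 1) f g' hf hg'0)).trans ?_
          rw [mul_left_comm, pow_succ, mul_assoc]
          exact mul_le_mul' le_rfl h1
        · rw [mul_left_comm]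
          refine mul_le_mul' le_rfl ?_
          rw [hQ, Submodule.span_mul_span, Set.singleton_mul_singleton,
            Submodule.span_singleton_le_iff_mem]
          exact habB
      have h3 : cont11 S (f' * g) ≤ B ⊔ Q * cont11 S g := by
        rw [cont11_le]
        intro i
        have e : f' * g = f * g - C a * (g * X ^ m) := by rw [hf']; ring
        rw [e, coeff_sub, coeff_C_mul, coeff_mul_X_pow']
        refine sub_mem (Submodule.mem_sup_left (coeff_mem_cont11 S _ _))
          (Submodule.mem_sup_right (Submodule.mul_mem_mul
            (Submodule.mem_span_singleton_self _) ?_))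
        split_ifs
        · exact coeff_mem_cont11 S _ _
        · exact zero_mem _
      have h4 : P' ^ (n + 1 + 1) * cont11 S g ≤ P ^ (n + 1) * B := by
        refine (ihm f' g hf'0 hg).trans ?_
        refine (mul_le_mul' (pow_le_pow_left' hP'P _) h3).trans ?_
        rw [Submodule.mul_sup]
        refine sup_le le_rfl ?_
        rw [mul_left_comm]
        exact h2
      refine (mul_le_mul' (sup_pow_le11 P' Q P hPP' hP'P (n + 1)) le_rfl).trans ?_
      rw [Submodule.sup_mul, mul_assoc Q]
      exact sup_le h4 h2

theorem mem_bStarSet11 {S M : Type*} [CommRing S] [Field M] [Algebra S M]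
    [IsFractionRing S M] {E : Submodule S M} {x : M} :
    x ∈ bStarSet E ↔ ∃ J : Submodule S M, J ≠ ⊥ ∧ J.FG ∧ ∀ y ∈ J, x * y ∈ E * J := by
  simp only [bStarSet, Set.mem_iUnion, Set.mem_ofPred_eq, SetLike.mem_coe, exists_prop,
    Submodule.mem_div_iff_forall_mul_mem]
  constructor
  · rintro ⟨J, ⟨h1, h2, _⟩, h3⟩
    exact ⟨J, h1, h2, h3⟩
  · rintro ⟨J, h1, h2, h3⟩
    exact ⟨J, ⟨h1, h2, FractionalIdeal.isFractional_of_fg h2⟩, h3⟩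

theorem bStarSet_add11 {S M : Type*} [CommRing S] [Field M] [Algebra S M]
    [IsFractionRing S M] {E : Submodule S M} {x y : M} (hx : x ∈ bStarSet E)
    (hy : y ∈ bStarSet E) : x + y ∈ bStarSet E := by
  rw [mem_bStarSet11] at *
  obtain ⟨J, h1, h2, h3⟩ := hx
  obtain ⟨J', h1', h2', h3'⟩ := hy
  refine ⟨J * J', ?_, h2.mul h2', ?_⟩
  · intro h
    rcases Submodule.mul_eq_bot.mp h with h | h
    · exact h1 h
    · exact h1' h
  · intro z hz
    induction hz using Submodule.mul_induction_on' with
    | mem_mul_mem u hu v hv =>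
      rw [add_mul]
      refine add_mem ?_ ?_
      · rw [← mul_assoc, ← mul_assoc]
        exact Submodule.mul_mem_mul (h3 u hu) hv
      · rw [mul_left_comm y, mul_left_comm E]
        exact Submodule.mul_mem_mul hu (h3' v hv)
    | add u _ v _ hu hv =>
      rw [mul_add]
      exact add_mem hu hv

/-- for `R` integrally closed and every nonzero fractional ideal `I` of `R`,
`(I[X])^{*_X} = I^{*_R}[X]`, where `I[X]` is the `R[X]`-submodule of `K(X)` generated by `I`
via the canonical embedding `ι : K →+* L = K(X)`. -/
theorem statement11 [IsIntegrallyClosed R]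
    (ι : K →+* L) (hι : ∀ r : R, ι (algebraMap R K r) = algebraMap R[X] L (C r))
    (I : Submodule R K) (hI : I ≠ ⊥) (hfrac : IsFractional (nonZeroDivisors R) I) :
    bStarSet (Submodule.span R[X] (ι '' (I : Set K))) =
      ((Submodule.span R[X] (ι '' bStarSet I) : Submodule R[X] L) : Set L) := by
  classical
  -- the canonical map `K[X] → L`
  let φ : K[X] →+* L := eval₂RingHom ι (algebraMap R[X] L X)
  have hφC : ∀ a : K, φ (C a) = ι a := fun a => by simp [φ]
  have hφX : φ X = algebraMap R[X] L X := by simp [φ]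
  have hφmap : ∀ p : R[X], φ (p.map (algebraMap R K)) = algebraMap R[X] L p := by
    have h : φ.comp (mapRingHom (algebraMap R K)) = algebraMap R[X] L := by
      apply Polynomial.ringHom_ext
      · intro r
        simp [hφC, hι]
      · simp [hφX]
    intro p
    rw [← h]
    rfl
  have hφ0 : ∀ p : K[X], φ p = 0 → p = 0 := by
    intro p hp
    obtain ⟨b, hb, hbp⟩ := IsLocalization.integerNormalization_spec (nonZeroDivisors R) p
    have hb0 : algebraMap R K b ≠ 0 := by
      simpa using nonZeroDivisors.ne_zero hb
    have e : b • p = C (algebraMap R K b) * p := by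
      rw [algebra_compatible_smul K b p, smul_eq_C_mul]
    have h0 : algebraMap R[X] L (IsLocalization.integerNormalization (nonZeroDivisors R) p) = 0 := by
      rw [← hφmap, hbp, e, map_mul, hp, mul_zero]
    have h1 : IsLocalization.integerNormalization (nonZeroDivisors R) p = 0 := by
      apply IsFractionRing.injective R[X] L
      rw [h0, map_zero]
    rw [h1, Polynomial.map_zero, e] at hbp
    rcases mul_eq_zero.mp hbp.symm with h | h
    · exact absurd (C_eq_zero.mp h) hb0
    · exact h
  have hφinj : ∀ p q : K[X], φ p = φ q → p = q := by
    intro p q h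
    apply sub_eq_zero.mp
    apply hφ0
    rw [map_sub, h, sub_self]
  have hsmul : ∀ (p : R[X]) (q : K[X]), p • φ q = φ (p.map (algebraMap R K) * q) := by
    intro p q
    rw [map_mul, hφmap, Algebra.smul_def]
  have hsmulι : ∀ (r : R) (x : K), ι (r • x) = (C r : R[X]) • ι x := by
    intro r x
    rw [Algebra.smul_def, Algebra.smul_def, map_mul, hι]
  apply Set.Subset.antisymm
  · intro f hf
    rw [mem_bStarSet11] at hf
    obtain ⟨G, hG0, ⟨T, hT⟩, hfG⟩ := hf
    by_cases hf0 : f = 0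
    · rw [hf0]
      exact zero_mem _
    obtain ⟨⟨d, hd⟩, hdT⟩ :=
      IsLocalization.exist_integer_multiples_of_finset (nonZeroDivisors R[X]) T
    have hd0 : algebraMap R[X] L d ≠ 0 := by
      simpa using nonZeroDivisors.ne_zero hd
    have hp' : ∀ t : L, ∃ p : K[X], t ∈ T → φ p = algebraMap R[X] L d * t := by
      intro t
      by_cases ht : t ∈ T
      · obtain ⟨p, hp⟩ := hdT t ht
        refine ⟨p.map (algebraMap R K), fun _ => ?_⟩
        rw [hφmap, hp, Algebra.smul_def]
      · exact ⟨0, fun h => absurd h ht⟩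
    choose p hp using hp'
    set C0 : Submodule R K := ⨆ t ∈ T, cont11 R (p t) with hC0
    have hpC : ∀ t ∈ T, cont11 R (p t) ≤ C0 := fun t ht =>
      le_iSup₂_of_le t ht le_rfl
    have hC0fg : C0.FG := Submodule.fg_biSup T _ (fun t _ => cont11_fg R (p t))
    set H : Ideal K[X] := Ideal.span (p '' (T : Set L)) with hH
    have hpH : ∀ t ∈ T, p t ∈ H := fun t ht => Ideal.subset_span ⟨t, ht, rfl⟩
    -- elements of `I[X] G`
    have key : ∀ y ∈ Submodule.span R[X] (ι '' (I : Set K)) * G,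
        ∃ q : K[X], q ∈ H ∧ (∀ i, q.coeff i ∈ I * C0) ∧ φ q = algebraMap R[X] L d * y := by
      intro y hy
      rw [← hT, Submodule.span_mul_span] at hy
      induction hy using Submodule.span_induction with
      | mem y hy =>
        obtain ⟨_, ⟨a, ha, rfl⟩, t, ht, rfl⟩ := hy
        refine ⟨C a * p t, H.mul_mem_left _ (hpH t ht), ?_, ?_⟩
        · intro i
          rw [coeff_C_mul]
          exact Submodule.mul_mem_mul ha (hpC t ht (coeff_mem_cont11 R _ _))
        · rw [map_mul, hφC, hp t ht]
          ring
      | zero => exact ⟨0, zero_mem _, fun i => by simp, by simp⟩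
      | add x y _ _ hx hy =>
        obtain ⟨q, h1, h2, h3⟩ := hx
        obtain ⟨q', h1', h2', h3'⟩ := hy
        refine ⟨q + q', add_mem h1 h1', fun i => ?_, by rw [map_add, h3, h3', mul_add]⟩
        rw [coeff_add]
        exact add_mem (h2 i) (h2' i)
      | smul r x _ hx =>
        obtain ⟨q, h1, h2, h3⟩ := hx
        refine ⟨r.map (algebraMap R K) * q, H.mul_mem_left _ h1, fun i => ?_, ?_⟩
        · rw [coeff_mul]
          refine sum_mem fun c _ => ?_
          rw [coeff_map, ← Algebra.smul_def]
          exact Submodule.smul_mem _ _ (h2 _)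
        · rw [← hsmul, h3, Algebra.smul_def, Algebra.smul_def]
          ring
    have key2 : ∀ t ∈ T, ∃ q : K[X], q ∈ H ∧ (∀ i, q.coeff i ∈ I * C0) ∧ φ q = f * φ (p t) := by
      intro t ht
      obtain ⟨q, h1, h2, h3⟩ := key (f * t) (hfG t (hT ▸ Submodule.subset_span ht))
      refine ⟨q, h1, h2, ?_⟩
      rw [h3, hp t ht]
      ring
    have key3 : ∀ u ∈ H, ∃ q ∈ H, φ q = f * φ u := by
      intro u hu
      induction hu using Submodule.span_induction with
      | mem y hy =>
        obtain ⟨t, ht, rfl⟩ := hy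
        obtain ⟨q, h1, _, h3⟩ := key2 t ht
        exact ⟨q, h1, h3⟩
      | zero => exact ⟨0, zero_mem _, by simp⟩
      | add x y _ _ hx hy =>
        obtain ⟨q, h1, h3⟩ := hx
        obtain ⟨q', h1', h3'⟩ := hy
        exact ⟨q + q', add_mem h1 h1', by rw [map_add, map_add, h3, h3', mul_add]⟩
      | smul r x _ hx =>
        obtain ⟨q, h1, h3⟩ := hx
        refine ⟨r * q, H.mul_mem_left _ h1, ?_⟩
        rw [map_mul, h3, smul_eq_mul, map_mul]
        ring
    -- some generator is nonzero
    obtain ⟨t₀, ht₀, ht₀0⟩ : ∃ t ∈ T, t ≠ 0 := by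
      by_contra! hcon
      apply hG0
      rw [← hT, Submodule.span_eq_bot]
      exact hcon
    have hpt₀ : p t₀ ≠ 0 := by
      intro h
      have := hp t₀ ht₀
      rw [h, map_zero] at this
      exact mul_ne_zero hd0 ht₀0 this.symm
    -- `f` is a polynomial
    obtain ⟨k, hk⟩ : ∃ k : K[X], φ k = f := by
      obtain ⟨h, hh⟩ := (IsPrincipalIdealRing.principal H).principal
      have hhH : h ∈ H := by
        rw [hh]
        exact Submodule.mem_span_singleton_self _
      have hh0 : h ≠ 0 := by
        intro h0
        have := hpH t₀ ht₀
        rw [hh, h0] at this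
        apply hpt₀
        simpa using this
      obtain ⟨q, hq, hqf⟩ := key3 h hhH
      rw [hh, Submodule.mem_span_singleton] at hq
      obtain ⟨k, rfl⟩ := hq
      refine ⟨k, ?_⟩
      rw [smul_eq_mul, map_mul] at hqf
      exact mul_right_cancel₀ (fun h0 => hh0 (hφ0 _ h0)) hqf
    have hk0 : k ≠ 0 := by
      rintro rfl
      apply hf0
      rw [← hk, map_zero]
    set n := T.sup (fun t => (p t).natDegree + 1) with hn
    set A := cont11 R k with hA
    have hDM : A * (A ^ n * C0) ≤ I * (A ^ n * C0) := by
      rw [← mul_assoc, ← pow_succ', hC0, Submodule.mul_iSup]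
      refine iSup_le fun t => ?_
      rw [Submodule.mul_iSup]
      refine iSup_le fun ht => ?_
      refine (dedekind_mertens11 n (k.natDegree + 1) k (p t) ?_ ?_).trans ?_
      · intro i hi
        exact coeff_eq_zero_of_natDegree_lt (by omega)
      · intro i hi
        have : (p t).natDegree + 1 ≤ n := Finset.le_sup (f := fun t => (p t).natDegree + 1) ht
        exact coeff_eq_zero_of_natDegree_lt (by omega)
      · rw [mul_left_comm I]
        refine mul_le_mul' le_rfl ?_
        obtain ⟨q, _, h2, h3⟩ := key2 t ht
        have : k * p t = q := by
          apply hφinj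
          rw [h3, map_mul, hk]
        rw [this, cont11_le]
        exact h2
    have hcoeff : ∀ i, k.coeff i ∈ bStarSet I := by
      intro i
      rw [mem_bStarSet11]
      refine ⟨A ^ n * C0, ?_, ((cont11_fg R k).pow n).mul hC0fg, fun y hy =>
        hDM (Submodule.mul_mem_mul (coeff_mem_cont11 R k i) hy)⟩
      intro h
      rcases Submodule.mul_eq_bot.mp h with h | h
      · exact cont11_ne_bot R hk0 (eq_zero_of_pow_eq_zero (n := n) h)
      · exact cont11_ne_bot R hpt₀ (eq_bot_iff.mpr (h ▸ hpC t₀ ht₀))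
    rw [← hk, k.as_sum_range_C_mul_X_pow, map_sum]
    refine sum_mem fun i _ => ?_
    rw [map_mul, hφC, map_pow, hφX, mul_comm, ← map_pow, ← Algebra.smul_def]
    exact Submodule.smul_mem _ _ (Submodule.subset_span ⟨_, hcoeff i, rfl⟩)
  · intro f hf
    rw [SetLike.mem_coe] at hf
    induction hf using Submodule.span_induction with
    | mem f hf =>
      obtain ⟨x, hx, rfl⟩ := hf
      rw [mem_bStarSet11] at hx ⊢
      obtain ⟨J, hJ0, ⟨T, hT⟩, hJ⟩ := hx
      have hmul : ∀ z ∈ I * J, ι z ∈ Submodule.span R[X] (ι '' (I : Set K)) *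
          Submodule.span R[X] (ι '' (T : Set K)) := by
        intro z hz
        rw [← hT, ← Submodule.span_eq I, Submodule.span_mul_span] at hz
        rw [Submodule.span_mul_span]
        induction hz using Submodule.span_induction with
        | mem z hz =>
          obtain ⟨a, ha, t, ht, rfl⟩ := hz
          apply Submodule.subset_span
          exact ⟨ι a, ⟨a, ha, rfl⟩, ι t, ⟨t, ht, rfl⟩, (map_mul ι a t).symm⟩
        | zero => rw [map_zero]; exact zero_mem _
        | add u v _ _ hu hv => rw [map_add]; exact add_mem hu hv
        | smul r u _ hu => rw [hsmulι]; exact Submodule.smul_mem _ _ hu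
      refine ⟨Submodule.span R[X] (ι '' (T : Set K)), ?_,
        Submodule.fg_span (T.finite_toSet.image _), ?_⟩
      · intro h
        apply hJ0
        rw [← hT, Submodule.span_eq_bot]
        intro t ht
        rw [Submodule.span_eq_bot] at h
        have := h (ι t) ⟨t, ht, rfl⟩
        simpa using this
      · intro y hy
        induction hy using Submodule.span_induction with
        | mem y hy =>
          obtain ⟨t, ht, rfl⟩ := hy
          rw [← map_mul]
          exact hmul _ (hJ t (hT ▸ Submodule.subset_span ht))
        | zero => rw [mul_zero]; exact zero_mem _
        | add u v _ _ hu hv => rw [mul_add]; exact add_mem hu hv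
        | smul r u _ hu => rw [mul_smul_comm]; exact Submodule.smul_mem _ _ hu
    | zero =>
      rw [mem_bStarSet11]
      refine ⟨1, one_ne_zero, ⟨{1}, by simp [Submodule.one_eq_span]⟩, fun y _ => ?_⟩
      rw [zero_mul]
      exact zero_mem _
    | add x y _ _ hx hy => exact bStarSet_add11 hx hy
    | smul r x _ hx =>
      rw [mem_bStarSet11] at hx ⊢
      obtain ⟨J, h1, h2, h3⟩ := hx
      refine ⟨J, h1, h2, fun y hy => ?_⟩
      rw [smul_mul_assoc]
      exact Submodule.smul_mem _ _ (h3 y hy)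
end

section
/- Let R be an integral domain, X an indeterminate over R, and * a star operation of finite character on R[X]. The following statements are equivalent: (i) *-Max(R[X]) = t-Max(R[X]); (ii) Q_t ⊊ R[X] for each *-maximal ideal Q of R[X] with Q ∩ R ≠ (0); (iii) \bar{*}-Max(R) = t-Max(R) and Q = (Q ∩ R)[X] for each *-maximal ideal Q of R[X] with Q ∩ R ≠ (0). -/
open Polynomial

/-- A *star operation* on a domain `S` with quotient field `M`: a map on the nonzero
fractional ideals of `S` satisfying `(aI)^* = aI^*`, `I ⊆ I^*`, monotonicity,
idempotency and `S^* = S`. -/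
structure IsStarOperation (S M : Type*) [CommRing S] [IsDomain S] [Field M] [Algebra S M]
    [IsFractionRing S M]
    (star : FractionalIdeal (nonZeroDivisors S) M → FractionalIdeal (nonZeroDivisors S) M) :
    Prop where
  smul_eq : ∀ a : M, a ≠ 0 → ∀ I, I ≠ 0 →
    star (FractionalIdeal.spanSingleton (nonZeroDivisors S) a * I) =
      FractionalIdeal.spanSingleton (nonZeroDivisors S) a * star I
  le_star : ∀ I, I ≠ 0 → I ≤ star I
  mono : ∀ I J, I ≠ 0 → J ≠ 0 → I ≤ J → star I ≤ star J
  idem : ∀ I, I ≠ 0 → star (star I) = star I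
  star_one : star 1 = 1

/-- A star operation has *finite character* if
`I^* = ⋃ {J^* : J nonzero finitely generated fractional ideal, J ⊆ I}`. -/
def StarFiniteCharacter (S M : Type*) [CommRing S] [IsDomain S] [Field M] [Algebra S M]
    [IsFractionRing S M]
    (star : FractionalIdeal (nonZeroDivisors S) M → FractionalIdeal (nonZeroDivisors S) M) :
    Prop :=
  ∀ I, I ≠ 0 → ∀ x : M,
    x ∈ star I ↔ ∃ J : FractionalIdeal (nonZeroDivisors S) M, J ≠ 0 ∧ (J : Submodule S M).FG ∧ J ≤ I ∧ x ∈ star J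

/-- `Q` is a `*`-maximal ideal: a proper nonzero integral `*`-ideal which is maximal
among proper integral `*`-ideals. -/
def IsStarMaximal {S M : Type*} [CommRing S] [IsDomain S] [Field M] [Algebra S M]
    [IsFractionRing S M]
    (star : FractionalIdeal (nonZeroDivisors S) M → FractionalIdeal (nonZeroDivisors S) M)
    (Q : Ideal S) : Prop :=
  Q ≠ ⊥ ∧ Q ≠ ⊤ ∧ star ↑Q = (Q : FractionalIdeal (nonZeroDivisors S) M) ∧
    ∀ J : Ideal S, J ≠ ⊥ → J ≠ ⊤ → star ↑J = (J : FractionalIdeal (nonZeroDivisors S) M) →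
      Q ≤ J → Q = J

/-- An *upper to zero* in `R[X]`: a nonzero prime ideal `Q` with `Q ∩ R = (0)`. -/
def IsUpperToZero {R : Type*} [CommRing R] [IsDomain R] (Q : Ideal R[X]) : Prop :=
  Q.IsPrime ∧ Q ≠ ⊥ ∧ Q.comap (C : R →+* R[X]) = ⊥

/-- `c(Q)`: the content of an ideal `Q` of `R[X]`, the ideal of `R` generated by the
coefficients of all elements of `Q`. -/
def contentIdeal {R : Type*} [CommRing R] (Q : Ideal R[X]) : Ideal R :=
  Ideal.span {a : R | ∃ f ∈ Q, ∃ n, f.coeff n = a}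

/-- `c(f)`: the content of a polynomial, the ideal generated by its coefficients. -/
def coeffIdeal {R : Type*} [CommRing R] (f : R[X]) : Ideal R :=
  Ideal.span {a : R | ∃ n, f.coeff n = a}

variable {R K L : Type*} [CommRing R] [IsDomain R]
  [Field K] [Algebra R K] [IsFractionRing R K]
  [Field L] [Algebra R[X] L] [IsFractionRing R[X] L]

/-- `I^{\bar{*}} = (I[X])^* ∩ K` for an integral ideal `I` of `R`, as a subset of `K`;
here `ι : K →+* L = K(X)` is the canonical embedding. -/
def barStarSet
    (star : FractionalIdeal (nonZeroDivisors R[X]) L → FractionalIdeal (nonZeroDivisors R[X]) L)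
    (ι : K →+* L) (I : Ideal R) : Set K :=
  {x : K | ι x ∈ star ((I.map (C : R →+* R[X]) : Ideal R[X]) :
      FractionalIdeal (nonZeroDivisors R[X]) L)}

/-- `I_t = ⋃ {J_v : J nonzero finitely generated fractional ideal, J ⊆ I}`, as a subset of
the quotient field, where `J_v = (S : (S : J)) = 1/(1/J)`. -/
def tSet {S M : Type*} [CommRing S] [IsDomain S] [Field M] [Algebra S M] [IsFractionRing S M]
    (I : FractionalIdeal (nonZeroDivisors S) M) : Set M :=
  ⋃ J ∈ {J : FractionalIdeal (nonZeroDivisors S) M |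
      J ≠ 0 ∧ (J : Submodule S M).FG ∧ J ≤ I},
    (((1 / (1 / J) : FractionalIdeal (nonZeroDivisors S) M) : Submodule S M) : Set M)

/-- `Q` is a `t`-maximal ideal of `S`: a proper nonzero integral `t`-ideal maximal among
proper integral `t`-ideals. -/
def IsTMaximal {S : Type*} (M : Type*) [CommRing S] [IsDomain S] [Field M] [Algebra S M]
    [IsFractionRing S M] (Q : Ideal S) : Prop :=
  Q ≠ ⊥ ∧ Q ≠ ⊤ ∧
    tSet (Q : FractionalIdeal (nonZeroDivisors S) M) =
      (((Q : FractionalIdeal (nonZeroDivisors S) M) : Submodule S M) : Set M) ∧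
    ∀ J : Ideal S, J ≠ ⊥ → J ≠ ⊤ →
      tSet (J : FractionalIdeal (nonZeroDivisors S) M) =
        (((J : FractionalIdeal (nonZeroDivisors S) M) : Submodule S M) : Set M) →
      Q ≤ J → Q = J

/-- `M` is a `\bar{*}`-maximal ideal of `R`. -/
def IsBarStarMaximal
    (star : FractionalIdeal (nonZeroDivisors R[X]) L → FractionalIdeal (nonZeroDivisors R[X]) L)
    (ι : K →+* L) (M : Ideal R) : Prop :=
  M ≠ ⊥ ∧ M ≠ ⊤ ∧ barStarSet star ι M = algebraMap R K '' (M : Set R) ∧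
    ∀ J : Ideal R, J ≠ ⊥ → J ≠ ⊤ → barStarSet star ι J = algebraMap R K '' (J : Set R) →
      M ≤ J → M = J

/-! ### Field-free `v`-membership and the `t`-closure of an integral ideal -/

/-- `s` lies in the `v`-closure of the ideal generated by `F`, phrased by divisibility. -/
def VM {S : Type*} [CommRing S] (F : Finset S) (s : S) : Prop :=
  ∀ p q : S, q ≠ 0 → (∀ a ∈ F, q ∣ p * a) → q ∣ p * s

/-- The properties of a finite character closure operation on integral ideals. -/
structure IC {S : Type*} [CommRing S] (c : Ideal S → Ideal S) : Prop where
  le : ∀ I, I ≠ ⊥ → I ≤ c I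
  mono : ∀ I J, I ≠ ⊥ → I ≤ J → c I ≤ c J
  idem : ∀ I, I ≠ ⊥ → c (c I) = c I
  fc : ∀ I, I ≠ ⊥ → ∀ s ∈ c I, ∃ F : Finset S, (F : Set S) ⊆ I ∧ (∃ a ∈ F, a ≠ 0) ∧
    s ∈ c (Ideal.span (F : Set S))

/-- Maximality among proper closed ideals. -/
def CMax {S : Type*} [CommRing S] (c : Ideal S → Ideal S) (Q : Ideal S) : Prop :=
  Q ≠ ⊥ ∧ Q ≠ ⊤ ∧ c Q = Q ∧ ∀ J : Ideal S, J ≠ ⊥ → J ≠ ⊤ → c J = J → Q ≤ J → Q = J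

theorem ne_bot_mono {S : Type*} [CommRing S] {I J : Ideal S} (h : I ≠ ⊥) (hIJ : I ≤ J) : J ≠ ⊥ := by
  rintro rfl
  exact h (le_bot_iff.mp hIJ)

theorem ne_bot_span {S : Type*} [CommRing S] {F : Finset S} (h : ∃ a ∈ F, a ≠ 0) :
    Ideal.span (F : Set S) ≠ ⊥ := by
  obtain ⟨a, ha, h0⟩ := h
  intro h
  exact h0 (Ideal.span_eq_bot.mp h a ha)

theorem IC.exists_max {S : Type*} [CommRing S] {c : Ideal S → Ideal S} (h : IC c) (I : Ideal S)
    (hI : I ≠ ⊥) (hc : c I ≠ ⊤) : ∃ Q, I ≤ Q ∧ CMax c Q := by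
  obtain ⟨Q, hIQ, hQ⟩ := zorn_le_nonempty₀ {J : Ideal S | I ≤ J ∧ c J ≠ ⊤} (by
    intro T hT hch y hy
    refine ⟨sSup T, ⟨(hT hy).1.trans (le_sSup hy), ?_⟩, fun z hz => le_sSup hz⟩
    intro htop
    have hne : sSup T ≠ ⊥ := ne_bot_mono hI ((hT hy).1.trans (le_sSup hy))
    obtain ⟨F, hF, hF0, h1⟩ := h.fc _ hne 1 (by rw [htop]; trivial)
    have key : ∀ G : Finset S, (G : Set S) ⊆ (sSup T : Ideal S) → ∃ J ∈ T, (G : Set S) ⊆ J := by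
      classical
      intro G
      induction G using Finset.induction_on with
      | empty => intro _; exact ⟨y, hy, by simp⟩
      | insert a G _ ih =>
        intro hG
        rw [Finset.coe_insert, Set.insert_subset_iff] at hG
        obtain ⟨J, hJ, hGJ⟩ := ih hG.2
        obtain ⟨J', hJ', ha⟩ := (Submodule.mem_sSup_of_directed ⟨y, hy⟩ hch.directedOn).mp hG.1
        obtain ⟨J'', hJ'', h1, h2⟩ := hch.directedOn J hJ J' hJ'
        refine ⟨J'', hJ'', ?_⟩
        rw [Finset.coe_insert, Set.insert_subset_iff]
        exact ⟨h2 ha, hGJ.trans h1⟩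
    obtain ⟨J, hJ, hFJ⟩ := key F hF
    apply (hT hJ).2
    rw [Ideal.eq_top_iff_one]
    exact h.mono _ _ (ne_bot_span hF0) (Ideal.span_le.mpr hFJ) h1) I ⟨le_rfl, hc⟩
  have hQb : Q ≠ ⊥ := ne_bot_mono hI hIQ
  have hcl : c Q = Q := by
    refine le_antisymm ?_ (h.le _ hQb)
    refine hQ.2 ⟨hIQ.trans (h.le _ hQb), ?_⟩ (h.le _ hQb)
    rw [h.idem _ hQb]
    exact hQ.1.2
  refine ⟨Q, hIQ, hQb, ?_, hcl, ?_⟩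
  · have := hQ.1.2
    rwa [hcl] at this
  · intro J hJ hJ1 hJc hQJ
    refine le_antisymm hQJ (hQ.2 ⟨hIQ.trans hQJ, ?_⟩ hQJ)
    rwa [hJc]

theorem IC.isPrime {S : Type*} [CommRing S] [IsDomain S] {c : Ideal S → Ideal S} (h : IC c)
    (hmul : ∀ I, I ≠ ⊥ → ∀ b, b ≠ 0 → ∀ s ∈ c I, b * s ∈ c (Ideal.span {b} * I)) (Q : Ideal S)
    (hQ : CMax c Q) : Q.IsPrime := by
  obtain ⟨hQ0, hQ1, hQc, hQm⟩ := hQ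
  refine ⟨hQ1, ?_⟩
  intro a b hab
  by_contra! hcon
  obtain ⟨ha, hb⟩ := hcon
  have hb0 : b ≠ 0 := by rintro rfl; exact hb Q.zero_mem
  set I := Q ⊔ Ideal.span {a} with hI
  have hQI : Q ≤ I := le_sup_left
  have hI0 : I ≠ ⊥ := ne_bot_mono hQ0 hQI
  have hle := h.le _ hI0
  have haI : a ∈ I := (le_sup_right : _ ≤ I) (Ideal.mem_span_singleton_self a)
  have htop : c I = ⊤ := by
    by_contra hne
    have := hQm (c I) (ne_bot_mono hI0 hle) hne (h.idem _ hI0) (hQI.trans hle)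
    exact ha (this ▸ hle haI)
  have h1 := hmul I hI0 b hb0 1 (by rw [htop]; trivial)
  rw [mul_one] at h1
  apply hb
  have hz : Ideal.span {b} * I ≠ ⊥ := by
    rw [Ne, Ideal.mul_eq_bot, not_or]
    exact ⟨by simpa using hb0, hI0⟩
  rw [← hQc]
  refine h.mono _ _ hz ?_ h1
  rw [hI, Ideal.mul_sup]
  refine sup_le Ideal.mul_le_right ?_
  rw [Ideal.span_singleton_mul_span_singleton, Ideal.span_singleton_le_iff_mem, mul_comm]
  exact hab

theorem VM.of_span {S : Type*} [CommRing S] {F : Finset S} {a : S}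
    (ha : a ∈ Ideal.span (F : Set S)) : VM F a := by
  intro p q _ h
  induction ha using Submodule.span_induction with
  | mem x hx => exact h x hx
  | zero => simp
  | add x y _ _ hx hy => rw [mul_add]; exact dvd_add hx hy
  | smul r x _ hx => rw [smul_eq_mul, mul_left_comm]; exact hx.mul_left r

theorem VM.trans {S : Type*} [CommRing S] {F G : Finset S} {a : S}
    (h : ∀ b ∈ F, VM G b) (ha : VM F a) : VM G a :=
  fun p q hq hG => ha p q hq fun b hb => h b hb p q hq hG

theorem VM.mono {S : Type*} [CommRing S] {F G : Finset S} {a : S}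
    (h : F ⊆ G) (ha : VM F a) : VM G a :=
  fun p q hq hG => ha p q hq fun b hb => hG b (h hb)

/-- The `t`-closure of an integral ideal. -/
def tI {S : Type*} [CommRing S] (I : Ideal S) : Ideal S where
  carrier := {s | ∃ F : Finset S, (F : Set S) ⊆ I ∧ (I ≠ ⊥ → ∃ a ∈ F, a ≠ 0) ∧ VM F s}
  zero_mem' := by
    by_cases h : I = ⊥
    · exact ⟨∅, by simp, fun h' => absurd h h', fun p q _ _ => by simp⟩
    · obtain ⟨q, hq, hq0⟩ := Submodule.exists_mem_ne_zero_of_ne_bot h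
      exact ⟨{q}, by simpa using hq, fun _ => ⟨q, by simp, hq0⟩, fun p q _ _ => by simp⟩
  add_mem' := by
    classical
    rintro a b ⟨F, hF, hF0, ha⟩ ⟨G, hG, hG0, hb⟩
    refine ⟨F ∪ G, by simp [hF, hG], fun h => ?_, fun p q hq h => ?_⟩
    · obtain ⟨x, hx, hx0⟩ := hF0 h
      exact ⟨x, Finset.mem_union_left _ hx, hx0⟩
    · rw [mul_add]
      exact dvd_add (ha.mono Finset.subset_union_left p q hq h)
        (hb.mono Finset.subset_union_right p q hq h)
  smul_mem' := by
    rintro r a ⟨F, hF, hF0, ha⟩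
    refine ⟨F, hF, hF0, fun p q hq h => ?_⟩
    rw [smul_eq_mul, mul_left_comm]
    exact (ha p q hq h).mul_left r

theorem mem_tI {S : Type*} [CommRing S] {I : Ideal S} (hI : I ≠ ⊥) {s : S} :
    s ∈ tI I ↔ ∃ F : Finset S, (F : Set S) ⊆ I ∧ (∃ a ∈ F, a ≠ 0) ∧ VM F s := by
  constructor
  · rintro ⟨F, h1, h2, h3⟩
    exact ⟨F, h1, h2 hI, h3⟩
  · rintro ⟨F, h1, h2, h3⟩
    exact ⟨F, h1, fun _ => h2, h3⟩

theorem tI_IC {S : Type*} [CommRing S] : IC (tI : Ideal S → Ideal S) := by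
  classical
  have hle : ∀ I : Ideal S, I ≠ ⊥ → I ≤ tI I := by
    intro I hI s hs
    obtain ⟨q, hq, hq0⟩ := Submodule.exists_mem_ne_zero_of_ne_bot hI
    refine (mem_tI hI).mpr ⟨{q, s}, ?_, ⟨q, by simp, hq0⟩, fun p q _ h => h s (by simp)⟩
    simp [Set.insert_subset_iff, hq, hs]
  have hmono : ∀ I J : Ideal S, I ≠ ⊥ → I ≤ J → tI I ≤ tI J := by
    intro I J hI hIJ s hs
    obtain ⟨F, h1, h2, h3⟩ := (mem_tI hI).mp hs
    exact (mem_tI (ne_bot_mono hI hIJ)).mpr ⟨F, h1.trans hIJ, h2, h3⟩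
  refine ⟨hle, hmono, ?_, ?_⟩
  · intro I hI
    refine le_antisymm ?_ (hle _ (ne_bot_mono hI (hle I hI)))
    intro s hs
    obtain ⟨F, h1, h2, h3⟩ := (mem_tI (ne_bot_mono hI (hle I hI))).mp hs
    have key : ∀ F : Finset S, (F : Set S) ⊆ tI I → ∃ G : Finset S, (G : Set S) ⊆ I ∧
        (∃ a ∈ G, a ≠ 0) ∧ ∀ b ∈ F, VM G b := by
      intro F
      induction F using Finset.induction_on with
      | empty =>
        intro _
        obtain ⟨q, hq, hq0⟩ := Submodule.exists_mem_ne_zero_of_ne_bot hI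
        exact ⟨{q}, by simpa using hq, ⟨q, by simp, hq0⟩, by simp⟩
      | insert a F _ ih =>
        intro hF
        rw [Finset.coe_insert, Set.insert_subset_iff] at hF
        obtain ⟨G, hG, ⟨x, hx, hx0⟩, hGF⟩ := ih hF.2
        obtain ⟨G', hG', _, ha⟩ := (mem_tI hI).mp hF.1
        refine ⟨G ∪ G', by simp [hG, hG'], ⟨x, Finset.mem_union_left _ hx, hx0⟩, ?_⟩
        intro b hb
        rcases Finset.mem_insert.mp hb with rfl | hb
        · exact ha.mono Finset.subset_union_right
        · exact (hGF b hb).mono Finset.subset_union_left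
    obtain ⟨G, hG, hG0, hGF⟩ := key F h1
    exact (mem_tI hI).mpr ⟨G, hG, hG0, VM.trans hGF h3⟩
  · intro I hI s hs
    obtain ⟨F, h1, h2, h3⟩ := (mem_tI hI).mp hs
    exact ⟨F, h1, h2, (mem_tI (ne_bot_span h2)).mpr ⟨F, Ideal.subset_span, h2, h3⟩⟩

/-! ### Polynomial facts -/

theorem C_dvd_of_primitive {g : R[X]} (hg : ∀ p q : R, q ≠ 0 → (∀ n, q ∣ p * g.coeff n) → q ∣ p)
    {a : R} (ha : a ≠ 0) (n : ℕ) : ∀ h : R[X], h.degree < n → C a ∣ g * h → C a ∣ h := by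
  induction n with
  | zero =>
    intro h hd _
    have : h = 0 := by
      by_contra hne
      exact absurd hd (not_lt.mpr (zero_le_degree_iff.mpr hne))
    simp [this]
  | succ n ih =>
    intro h hd hgh
    by_cases h0 : h = 0
    · simp [h0]
    have hdn : h.eraseLead.degree < n := by
      have h1 := degree_eraseLead_lt h0
      have h2 : h.degree ≤ n := by
        rw [degree_eq_natDegree h0] at hd ⊢
        norm_cast at hd ⊢
        omega
      exact lt_of_lt_of_le h1 h2
    have key : ∀ k j, g.natDegree < j + k → C a ∣ C (g.coeff j) * h := by
      intro k
      induction k with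
      | zero => 
        intro j hj
        rw [coeff_eq_zero_of_natDegree_lt (by simpa using hj)]
        simp
      | succ k ihk =>
        intro j hj
        have hgt : ∀ i, j < i → C a ∣ C (g.coeff i) * h := by
          intro i hi
          exact ihk i (by omega)
        have hlead : a ∣ g.coeff j * h.leadingCoeff := by
          have h1 : a ∣ (g * h).coeff (j + h.natDegree) := (C_dvd_iff_dvd_coeff _ _).mp hgh _
          rw [coeff_mul, ← Finset.add_sum_erase _ _ (a := (j, h.natDegree)) (by simp)] at h1
          refine (dvd_add_left ?_).mp h1
          refine Finset.dvd_sum ?_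
          rintro ⟨i, l⟩ hil
          rw [Finset.mem_erase, Ne, Prod.mk.injEq] at hil
          have hs : i + l = j + h.natDegree := Finset.HasAntidiagonal.mem_antidiagonal.mp hil.2
          rcases lt_trichotomy i j with hlt | heq | hlt
          · have : h.coeff l = 0 := coeff_eq_zero_of_natDegree_lt (by omega)
            simp [this]
          · exact absurd ⟨heq, by omega⟩ hil.1
          · have := (C_dvd_iff_dvd_coeff _ _).mp (hgt i hlt) l
            simpa using this
        have hdec : C (g.coeff j) * h = C (g.coeff j) * h.eraseLead +
            C (g.coeff j * h.leadingCoeff) * X ^ h.natDegree := by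
          conv_lhs => rw [← eraseLead_add_C_mul_X_pow h]
          rw [C_mul]; ring
        have h2 : C a ∣ C (g.coeff j * h.leadingCoeff) * X ^ h.natDegree :=
          (map_dvd C hlead).mul_right _
        rw [hdec]
        refine dvd_add (ih _ ?_ ?_) h2
        · refine lt_of_le_of_lt ?_ hdn
          rw [← smul_eq_C_mul]
          exact degree_smul_le _ _
        · have h3 : C a ∣ g * (C (g.coeff j) * h) := by
            rw [mul_left_comm]; exact hgh.mul_left _
          rw [hdec, mul_add] at h3
          exact (dvd_add_left (h2.mul_left g)).mp h3
    rw [C_dvd_iff_dvd_coeff]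
    intro i
    refine hg _ _ ha fun m => ?_
    have := (C_dvd_iff_dvd_coeff _ _).mp (key (g.natDegree + 1) m (by omega)) i
    rw [coeff_C_mul] at this
    rwa [mul_comm]

theorem exists_content {Q : Ideal R[X]} (F : Finset R) (hF : (F : Set R) ⊆ contentIdeal Q) :
    ∃ g ∈ Q, (F : Set R) ⊆ coeffIdeal g := by
  classical
  have merge : ∀ g₁ ∈ Q, ∀ g₂ ∈ Q, ∃ g ∈ Q, coeffIdeal g₁ ≤ coeffIdeal g ∧
      coeffIdeal g₂ ≤ coeffIdeal g := by
    intro g₁ h₁ g₂ h₂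
    have hc : ∀ n, (g₁ + X ^ (g₁.natDegree + 1) * g₂).coeff (n + (g₁.natDegree + 1)) = g₂.coeff n := by
      intro n
      rw [coeff_add, coeff_X_pow_mul, coeff_eq_zero_of_natDegree_lt (by omega), zero_add]
    have hc1 : ∀ n, n ≤ g₁.natDegree →
        (g₁ + X ^ (g₁.natDegree + 1) * g₂).coeff n = g₁.coeff n := by
      intro n hn
      rw [coeff_add, coeff_X_pow_mul', if_neg (by omega), add_zero]
    refine ⟨g₁ + X ^ (g₁.natDegree + 1) * g₂, Q.add_mem h₁ (Q.mul_mem_left _ h₂), ?_, ?_⟩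
    · refine Ideal.span_le.mpr ?_
      rintro _ ⟨n, rfl⟩
      by_cases hn : n ≤ g₁.natDegree
      · exact Ideal.subset_span ⟨n, hc1 n hn⟩
      · rw [coeff_eq_zero_of_natDegree_lt (by omega)]
        exact Ideal.zero_mem _
    · refine Ideal.span_le.mpr ?_
      rintro _ ⟨n, rfl⟩
      exact Ideal.subset_span ⟨_, hc n⟩
  have one : ∀ a ∈ contentIdeal Q, ∃ g ∈ Q, a ∈ coeffIdeal g := by
    intro a ha
    unfold _root_.contentIdeal at ha
    induction ha using Submodule.span_induction with
    | mem x hx =>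
      obtain ⟨f, hf, n, hn⟩ := hx
      exact ⟨f, hf, Ideal.subset_span ⟨n, hn⟩⟩
    | zero => exact ⟨0, Q.zero_mem, Ideal.zero_mem _⟩
    | add x y _ _ hx hy =>
      obtain ⟨g₁, h₁, hx⟩ := hx
      obtain ⟨g₂, h₂, hy⟩ := hy
      obtain ⟨g, hg, h1, h2⟩ := merge g₁ h₁ g₂ h₂
      exact ⟨g, hg, Ideal.add_mem _ (h1 hx) (h2 hy)⟩
    | smul r x _ hx =>
      obtain ⟨g, hg, hx⟩ := hx
      exact ⟨g, hg, Ideal.mul_mem_left _ _ hx⟩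
  induction F using Finset.induction_on with
  | empty => exact ⟨0, Q.zero_mem, by simp⟩
  | insert a F _ ih =>
    rw [Finset.coe_insert, Set.insert_subset_iff] at hF
    obtain ⟨g₁, h₁, hx⟩ := ih hF.2
    obtain ⟨g₂, h₂, hy⟩ := one a hF.1
    obtain ⟨g, hg, h1, h2⟩ := merge g₁ h₁ g₂ h₂
    refine ⟨g, hg, ?_⟩
    rw [Finset.coe_insert, Set.insert_subset_iff]
    exact ⟨h2 hy, hx.trans h1⟩

theorem map_C_ne_bot {I : Ideal R} (hI : I ≠ ⊥) : I.map (C : R →+* R[X]) ≠ ⊥ := by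
  rwa [Ne, Ideal.map_eq_bot_iff_of_injective C_injective]

theorem comap_map_C (I : Ideal R) : (I.map (C : R →+* R[X])).comap C = I := by
  ext x
  rw [Ideal.mem_comap, Ideal.mem_map_C_iff]
  constructor
  · intro h
    simpa using h 0
  · intro h n
    rw [coeff_C]
    split_ifs
    · exact h
    · exact I.zero_mem

/-- If the `t`-closure of the content is everything, so is the `t`-closure of the ideal. -/
theorem tI_content {Q : Ideal R[X]} (hQ : Q.comap (C : R →+* R[X]) ≠ ⊥)
    (ht : tI Q ≠ ⊤) : tI (contentIdeal Q) ≠ ⊤ := by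
  classical
  intro htop
  apply ht
  obtain ⟨a, ha, ha0⟩ := Submodule.exists_mem_ne_zero_of_ne_bot hQ
  have haQ : C a ∈ Q := ha
  have hCa : (C a : R[X]) ≠ 0 := by simpa using ha0
  have hQ0 : Q ≠ ⊥ := by rintro rfl; exact hCa haQ
  have hc0 : contentIdeal Q ≠ ⊥ := by
    intro h
    have : a ∈ contentIdeal Q := Ideal.subset_span ⟨C a, haQ, 0, by simp⟩
    rw [h] at this
    exact ha0 this
  obtain ⟨F, hF, hF0, h1⟩ := (mem_tI hc0).mp (show (1 : R) ∈ tI (contentIdeal Q) by rw [htop]; trivial)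
  obtain ⟨g, hg, hFg⟩ := exists_content F hF
  have hprim : ∀ p q : R, q ≠ 0 → (∀ n, q ∣ p * g.coeff n) → q ∣ p := by
    intro p q hq h
    have h2 : ∀ x ∈ coeffIdeal g, q ∣ p * x := by
      intro x hx
      unfold coeffIdeal at hx
      induction hx using Submodule.span_induction with
      | mem x hx => obtain ⟨n, rfl⟩ := hx; exact h n
      | zero => simp
      | add x y _ _ hx hy => rw [mul_add]; exact dvd_add hx hy
      | smul r x _ hx => rw [smul_eq_mul, mul_left_comm]; exact hx.mul_left r
    simpa using h1 p q hq fun x hx => h2 x (hFg hx)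
  rw [Ideal.eq_top_iff_one, mem_tI hQ0]
  refine ⟨{C a, g}, by simp [Set.insert_subset_iff, haQ, hg], ⟨C a, by simp, hCa⟩, ?_⟩
  intro p q hq h
  obtain ⟨u, hu⟩ := h (C a) (by simp)
  obtain ⟨k, hk⟩ := h g (by simp)
  have h3 : g * u = C a * k := by
    apply mul_left_cancel₀ hq
    linear_combination (-g) * hu + C a * hk
  obtain ⟨w, rfl⟩ := C_dvd_of_primitive hprim ha0 (u.natDegree + 1) u
    (lt_of_le_of_lt degree_le_natDegree (by exact_mod_cast Nat.lt_succ_self _)) ⟨k, h3⟩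
  refine ⟨w, ?_⟩
  rw [mul_one]
  apply mul_left_cancel₀ hCa
  linear_combination hu

theorem le_map_content (Q : Ideal R[X]) : Q ≤ (contentIdeal Q).map (C : R →+* R[X]) := by
  intro f hf
  rw [Ideal.mem_map_C_iff]
  exact fun n => Ideal.subset_span ⟨f, hf, n, rfl⟩

theorem tI_map_le {I : Ideal R} (hI : I ≠ ⊥) :
    tI (I.map (C : R →+* R[X])) ≤ (tI I).map (C : R →+* R[X]) := by
  classical
  intro f hf
  obtain ⟨F, hF, ⟨g, hg, hg0⟩, hv⟩ := (mem_tI (map_C_ne_bot hI)).mp hf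
  rw [Ideal.mem_map_C_iff]
  intro n
  rw [mem_tI hI]
  refine ⟨F.biUnion fun h => h.support.image h.coeff, ?_, ?_, ?_⟩
  · intro x hx
    simp only [Finset.coe_biUnion, Set.mem_iUnion, Finset.mem_coe, Finset.mem_image] at hx
    obtain ⟨h, hh, m, _, rfl⟩ := hx
    exact Ideal.mem_map_C_iff.mp (hF hh) m
  · refine ⟨g.leadingCoeff, ?_, by simpa using hg0⟩
    rw [Finset.mem_biUnion]
    exact ⟨g, hg, Finset.mem_image.mpr ⟨g.natDegree, by simpa using hg0, rfl⟩⟩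
  · intro p q hq h
    have h1 := hv (C p) (C q) (by simpa using hq) (by
      intro u hu
      rw [C_dvd_iff_dvd_coeff]
      intro m
      rw [coeff_C_mul]
      by_cases hm : m ∈ u.support
      · exact h _ (Finset.mem_biUnion.mpr ⟨u, hu, Finset.mem_image_of_mem _ hm⟩)
      · rw [notMem_support_iff.mp hm]
        simp)
    rw [C_dvd_iff_dvd_coeff] at h1
    simpa using h1 n

theorem tI_comap_le {Q : Ideal R[X]} (hQ : Q.comap (C : R →+* R[X]) ≠ ⊥) :
    tI (Q.comap C) ≤ (tI Q).comap (C : R →+* R[X]) := by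
  classical
  intro s hs
  obtain ⟨F, hF, ⟨a, ha, ha0⟩, hv⟩ := (mem_tI hQ).mp hs
  have hCa : (C a : R[X]) ≠ 0 := by simpa using ha0
  have haQ : C a ∈ Q := hF ha
  have hQ0 : Q ≠ ⊥ := by rintro rfl; exact hCa haQ
  rw [Ideal.mem_comap, mem_tI hQ0]
  refine ⟨F.image C, ?_, ⟨C a, Finset.mem_image_of_mem _ ha, hCa⟩, ?_⟩
  · rw [Finset.coe_image, Set.image_subset_iff]
    exact hF
  · intro p q hq h
    -- `p * C a = q * u`, so `p / q = u / a`
    obtain ⟨u, hu⟩ := h _ (Finset.mem_image_of_mem C ha)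
    have h2 : C a ∣ u * C s := by
      rw [C_dvd_iff_dvd_coeff]
      intro n
      rw [coeff_mul_C]
      refine hv _ _ ha0 fun b hb => ?_
      obtain ⟨w, hw⟩ := h _ (Finset.mem_image_of_mem C hb)
      have h3 : u * C b = C a * w := by
        apply mul_left_cancel₀ hq
        linear_combination (- C b) * hu + C a * hw
      have := congrArg (fun f => coeff f n) h3
      simp only [coeff_mul_C, coeff_C_mul] at this
      exact ⟨_, this⟩
    obtain ⟨w, hw⟩ := h2
    refine ⟨w, ?_⟩
    apply mul_left_cancel₀ hCa
    linear_combination C s * hu + q * hw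

theorem tI_upper {Q : Ideal R[X]} (hp : Q.IsPrime) (hQ : Q ≠ ⊥)
    (h0 : Q.comap (C : R →+* R[X]) = ⊥) : tI Q = Q := by
  classical
  refine le_antisymm ?_ (tI_IC.le _ hQ)
  have hex : ∃ n, ∃ f ∈ Q, f ≠ 0 ∧ f.natDegree = n := by
    obtain ⟨f, hf, hf0⟩ := Submodule.exists_mem_ne_zero_of_ne_bot hQ
    exact ⟨_, f, hf, hf0, rfl⟩
  obtain ⟨f, hf, hf0, hfn⟩ := Nat.find_spec hex
  have hmin : ∀ g ∈ Q, g ≠ 0 → f.natDegree ≤ g.natDegree := by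
    intro g hg hg0
    rw [hfn]
    exact Nat.find_min' hex ⟨g, hg, hg0, rfl⟩
  have hlc : f.leadingCoeff ≠ 0 := by simpa using hf0
  have hdiv : ∀ n : ℕ, ∀ g ∈ Q, g.degree < n → ∃ r : R, r ≠ 0 ∧ f ∣ C r * g := by
    intro n
    induction n with
    | zero =>
      intro g _ hd
      have : g = 0 := by
        by_contra hne
        exact absurd hd (not_lt.mpr (zero_le_degree_iff.mpr hne))
      exact ⟨1, one_ne_zero, by simp [this]⟩
    | succ n ih =>
      intro g hg hd
      by_cases hg0 : g = 0
      · exact ⟨1, one_ne_zero, by simp [hg0]⟩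
      have hle := hmin g hg hg0
      have hglc : g.leadingCoeff ≠ 0 := by simpa using hg0
      have hlt : (C f.leadingCoeff * g -
          C g.leadingCoeff * X ^ (g.natDegree - f.natDegree) * f).degree < g.degree := by
        have e1 : (C f.leadingCoeff * g).degree = g.degree := degree_C_mul hlc
        have e2 : (C g.leadingCoeff * X ^ (g.natDegree - f.natDegree) * f).degree = g.degree := by
          rw [degree_mul, degree_C_mul_X_pow _ hglc, degree_eq_natDegree hf0,
            degree_eq_natDegree hg0]
          norm_cast
          omega
        rw [← e1]
        refine degree_sub_lt_left (e1.trans e2.symm) (mul_ne_zero (by simpa using hlc) hg0) ?_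
        rw [leadingCoeff_mul, leadingCoeff_mul, leadingCoeff_C, leadingCoeff_C_mul_X_pow, mul_comm]
      obtain ⟨r, hr, hdv⟩ := ih _ (Q.sub_mem (Q.mul_mem_left (C f.leadingCoeff) hg)
        (Q.mul_mem_left (C g.leadingCoeff * X ^ (g.natDegree - f.natDegree)) hf)) (by
          refine lt_of_lt_of_le hlt ?_
          rw [degree_eq_natDegree hg0] at hd ⊢
          norm_cast at hd ⊢
          omega)
      refine ⟨r * f.leadingCoeff, mul_ne_zero hr hlc, ?_⟩
      rw [mul_sub] at hdv
      have := (dvd_sub_left (c := C r * (C g.leadingCoeff * X ^ (g.natDegree - f.natDegree) * f))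
        (Dvd.dvd.mul_left (Dvd.intro_left _ rfl) _)).mp hdv
      rwa [C_mul, mul_assoc]
  intro s hs
  obtain ⟨F, hF, _, hv⟩ := (mem_tI hQ).mp hs
  have hcom : ∀ F : Finset R[X], (F : Set R[X]) ⊆ Q → ∃ r : R, r ≠ 0 ∧ ∀ g ∈ F, f ∣ C r * g := by
    intro F
    induction F using Finset.induction_on with
    | empty => exact fun _ => ⟨1, one_ne_zero, by simp⟩
    | insert g F _ ih =>
      intro hF
      rw [Finset.coe_insert, Set.insert_subset_iff] at hF
      obtain ⟨r, hr, h⟩ := ih hF.2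
      obtain ⟨r', hr', h'⟩ := hdiv (g.natDegree + 1) g hF.1
        (lt_of_le_of_lt degree_le_natDegree (by exact_mod_cast Nat.lt_succ_self _))
      refine ⟨r * r', mul_ne_zero hr hr', ?_⟩
      intro x hx
      rcases Finset.mem_insert.mp hx with rfl | hx
      · rw [C_mul, mul_assoc]
        exact h'.mul_left _
      · rw [C_mul, mul_comm (C r), mul_assoc]
        exact (h x hx).mul_left _
  obtain ⟨r, hr, h⟩ := hcom F hF
  have h1 : C r * s ∈ Q := Q.mem_of_dvd (hv (C r) f hf0 h) hf
  rcases hp.mem_or_mem h1 with h2 | h2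
  · exfalso
    have : r ∈ Q.comap (C : R →+* R[X]) := h2
    rw [h0] at this
    exact hr this
  · exact h2

/-! ### The star closure on integral ideals -/

section bridge

variable {S M : Type*} [CommRing S] [IsDomain S] [Field M] [Algebra S M] [IsFractionRing S M]

/-- The star closure of an integral ideal, as an integral ideal. -/
def sI (star : FractionalIdeal (nonZeroDivisors S) M → FractionalIdeal (nonZeroDivisors S) M)
    (I : Ideal S) : Ideal S :=
  Submodule.comap (Algebra.linearMap S M) (star (I : FractionalIdeal (nonZeroDivisors S) M) : Submodule S M)

theorem mem_sI {star : FractionalIdeal (nonZeroDivisors S) M → FractionalIdeal (nonZeroDivisors S) M}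
    {I : Ideal S} {s : S} :
    s ∈ sI star I ↔ algebraMap S M s ∈ star (I : FractionalIdeal (nonZeroDivisors S) M) := Iff.rfl

theorem algMap_mem_coe {I : Ideal S} {s : S} :
    algebraMap S M s ∈ (I : FractionalIdeal (nonZeroDivisors S) M) ↔ s ∈ I := by
  rw [FractionalIdeal.mem_coeIdeal]
  constructor
  · rintro ⟨x, hx, h⟩
    rwa [← IsFractionRing.injective S M h]
  · exact fun h => ⟨s, h, rfl⟩

theorem star_le_one {star : FractionalIdeal (nonZeroDivisors S) M → FractionalIdeal (nonZeroDivisors S) M}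
    (h : IsStarOperation S M star) {J : FractionalIdeal (nonZeroDivisors S) M} (hJ : J ≠ 0)
    (hJ1 : J ≤ 1) : star J ≤ 1 := by
  rw [← h.star_one]
  exact h.mono _ _ hJ one_ne_zero hJ1

theorem coe_sI {star : FractionalIdeal (nonZeroDivisors S) M → FractionalIdeal (nonZeroDivisors S) M}
    (h : IsStarOperation S M star) {I : Ideal S} (hI : I ≠ ⊥) :
    (sI star I : FractionalIdeal (nonZeroDivisors S) M) =
      star (I : FractionalIdeal (nonZeroDivisors S) M) := by
  apply le_antisymm
  · intro x hx
    obtain ⟨s, hs, rfl⟩ := (FractionalIdeal.mem_coeIdeal _).mp hx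
    exact hs
  · intro x hx
    obtain ⟨s, rfl⟩ := (FractionalIdeal.mem_one_iff _).mp
      (star_le_one h (FractionalIdeal.coeIdeal_ne_zero.mpr hI) FractionalIdeal.coeIdeal_le_one hx)
    exact algMap_mem_coe.mpr hx

/-- A finitely generated fractional ideal inside an integral ideal is generated by a finite set. -/
theorem exists_finset {I : Ideal S} {J : FractionalIdeal (nonZeroDivisors S) M}
    (hJ : J ≠ 0) (hfg : (J : Submodule S M).FG)
    (hJI : J ≤ (I : FractionalIdeal (nonZeroDivisors S) M)) :
    ∃ F : Finset S, (F : Set S) ⊆ I ∧ (∃ a ∈ F, a ≠ 0) ∧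
      J = ((Ideal.span (F : Set S) : Ideal S) : FractionalIdeal (nonZeroDivisors S) M) := by
  classical
  obtain ⟨T, hT⟩ := hfg
  have hT' : ∀ x ∈ T, ∃ s ∈ I, algebraMap S M s = x := by
    intro x hx
    have : x ∈ (J : Submodule S M) := by rw [← hT]; exact Submodule.subset_span hx
    exact (FractionalIdeal.mem_coeIdeal _).mp (hJI this)
  choose! g hg hgx using hT'
  have hJeq : J = ((Ideal.span ((T.image g : Finset S) : Set S) : Ideal S) :
      FractionalIdeal (nonZeroDivisors S) M) := by
    apply FractionalIdeal.coeToSubmodule_injective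
    beta_reduce
    rw [FractionalIdeal.coe_coeIdeal, IsLocalization.coeSubmodule_span, ← hT]
    congr 1
    rw [Finset.coe_image, Set.image_image]
    ext x
    constructor
    · exact fun hx => ⟨x, hx, hgx x hx⟩
    · rintro ⟨y, hy, rfl⟩
      simpa only [hgx y hy] using hy
  refine ⟨T.image g, ?_, ?_, hJeq⟩
  · intro s hs
    rw [Finset.coe_image] at hs
    obtain ⟨x, hx, rfl⟩ := hs
    exact hg x hx
  · by_contra! hcon
    apply hJ
    rw [hJeq, FractionalIdeal.coeIdeal_eq_zero, Ideal.span_eq_bot]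
    exact fun x hx => hcon x hx

theorem mem_one_of_dvd {x : M} {p q s : S} (hq : q ≠ 0)
    (hx : x = algebraMap S M p / algebraMap S M q) :
    x * algebraMap S M s ∈ (1 : FractionalIdeal (nonZeroDivisors S) M) ↔ q ∣ p * s := by
  have hq' : algebraMap S M q ≠ 0 := by
    rwa [Ne, IsFractionRing.to_map_eq_zero_iff]
  rw [FractionalIdeal.mem_one_iff, hx]
  constructor
  · rintro ⟨y, hy⟩
    refine ⟨y, IsFractionRing.injective S M ?_⟩
    rw [map_mul, map_mul, hy]
    field_simp
  · rintro ⟨y, hy⟩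
    refine ⟨y, ?_⟩
    have := congrArg (algebraMap S M) hy
    rw [map_mul, map_mul] at this
    field_simp
    rw [this, mul_comm]

theorem exists_frac (x : M) : ∃ p q : S, q ≠ 0 ∧ x = algebraMap S M p / algebraMap S M q := by
  obtain ⟨p, q, hq, h⟩ := IsFractionRing.div_surjective (A := S) x
  exact ⟨p, q, nonZeroDivisors.ne_zero hq, h.symm⟩

theorem mem_vv {F : Finset S} (hF : ∃ a ∈ F, a ≠ 0) (x : M) :
    x ∈ (1 / (1 / ((Ideal.span (F : Set S) : Ideal S) : FractionalIdeal (nonZeroDivisors S) M)) :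
      FractionalIdeal (nonZeroDivisors S) M) ↔ ∃ s, VM F s ∧ algebraMap S M s = x := by
  have hJ0 : ((Ideal.span (F : Set S) : Ideal S) : FractionalIdeal (nonZeroDivisors S) M) ≠ 0 :=
    FractionalIdeal.coeIdeal_ne_zero.mpr (ne_bot_span hF)
  have hmem : ∀ u : M, u ∈ (1 / ((Ideal.span (F : Set S) : Ideal S) :
      FractionalIdeal (nonZeroDivisors S) M) : FractionalIdeal (nonZeroDivisors S) M) ↔
      ∀ a ∈ Ideal.span (F : Set S), u * algebraMap S M a ∈
        (1 : FractionalIdeal (nonZeroDivisors S) M) := by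
    intro u
    rw [FractionalIdeal.mem_div_iff_of_ne_zero hJ0]
    constructor
    · exact fun h a ha => h _ (algMap_mem_coe.mpr ha)
    · intro h y hy
      obtain ⟨s, hs, rfl⟩ := (FractionalIdeal.mem_coeIdeal _).mp hy
      exact h s hs
  have h1 : (1 : M) ∈ (1 / ((Ideal.span (F : Set S) : Ideal S) :
      FractionalIdeal (nonZeroDivisors S) M) : FractionalIdeal (nonZeroDivisors S) M) := by
    rw [hmem]
    intro a _
    rw [one_mul]
    exact FractionalIdeal.coe_mem_one _ a
  have hne : (1 / ((Ideal.span (F : Set S) : Ideal S) :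
      FractionalIdeal (nonZeroDivisors S) M) : FractionalIdeal (nonZeroDivisors S) M) ≠ 0 := by
    intro h
    rw [h, FractionalIdeal.mem_zero_iff] at h1
    exact one_ne_zero h1
  rw [FractionalIdeal.mem_div_iff_of_ne_zero hne]
  constructor
  · intro h
    have hx := h 1 h1
    rw [mul_one] at hx
    obtain ⟨s, rfl⟩ := (FractionalIdeal.mem_one_iff _).mp hx
    refine ⟨s, ?_, rfl⟩
    intro p q hq hd
    rw [← mem_one_of_dvd (M := M) hq rfl, mul_comm]
    apply h
    rw [hmem]
    intro a ha
    rw [mem_one_of_dvd hq rfl]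
    exact VM.of_span ha p q hq hd
  · rintro ⟨s, hs, rfl⟩ u hu
    obtain ⟨p, q, hq, hpq⟩ := exists_frac (S := S) u
    rw [mul_comm, mem_one_of_dvd hq hpq]
    refine hs p q hq fun a ha => ?_
    rw [← mem_one_of_dvd hq hpq]
    exact (hmem u).mp hu a (Ideal.subset_span ha)

theorem tSet_eq {I : Ideal S} (hI : I ≠ ⊥) :
    tSet (I : FractionalIdeal (nonZeroDivisors S) M) = algebraMap S M '' (tI I : Set S) := by
  ext x
  simp only [tSet, Set.mem_iUnion, Set.mem_ofPred_eq, Set.mem_image, SetLike.mem_coe,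
    FractionalIdeal.mem_coe, exists_prop]
  constructor
  · rintro ⟨J, ⟨hJ, hfg, hJI⟩, hx⟩
    obtain ⟨F, hF, hF0, rfl⟩ := exists_finset hJ hfg hJI
    obtain ⟨s, hs, rfl⟩ := (mem_vv hF0 x).mp hx
    exact ⟨s, (mem_tI hI).mpr ⟨F, hF, hF0, hs⟩, rfl⟩
  · rintro ⟨s, hs, rfl⟩
    obtain ⟨F, hF, hF0, hv⟩ := (mem_tI hI).mp hs
    refine ⟨_, ⟨FractionalIdeal.coeIdeal_ne_zero.mpr (ne_bot_span hF0), ?_, ?_⟩,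
      (mem_vv hF0 _).mpr ⟨s, hv, rfl⟩⟩
    · rw [FractionalIdeal.coe_coeIdeal]
      exact Submodule.FG.map _ ⟨F, rfl⟩
    · rw [FractionalIdeal.coeIdeal_le_coeIdeal]
      exact Ideal.span_le.mpr hF

theorem coe_set_eq (I : Ideal S) :
    (((I : FractionalIdeal (nonZeroDivisors S) M) : Submodule S M) : Set M) =
      algebraMap S M '' (I : Set S) := by
  ext x
  simp only [SetLike.mem_coe, FractionalIdeal.mem_coe, Set.mem_image, FractionalIdeal.mem_coeIdeal]

theorem image_inj {I J : Ideal S} :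
    algebraMap S M '' (I : Set S) = algebraMap S M '' (J : Set S) ↔ I = J := by
  rw [(Set.image_injective.mpr (IsFractionRing.injective S M)).eq_iff, SetLike.coe_set_eq]

theorem isTMaximal_iff (Q : Ideal S) : IsTMaximal M Q ↔ CMax tI Q := by
  have key : ∀ I : Ideal S, I ≠ ⊥ → (tSet (I : FractionalIdeal (nonZeroDivisors S) M) =
      (((I : FractionalIdeal (nonZeroDivisors S) M) : Submodule S M) : Set M) ↔ tI I = I) := by
    intro I hI
    rw [tSet_eq hI, coe_set_eq, image_inj]
  unfold IsTMaximal CMax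
  constructor
  · rintro ⟨h1, h2, h3, h4⟩
    exact ⟨h1, h2, (key _ h1).mp h3, fun J hJ hJ1 hJc => h4 J hJ hJ1 ((key J hJ).mpr hJc)⟩
  · rintro ⟨h1, h2, h3, h4⟩
    exact ⟨h1, h2, (key _ h1).mpr h3, fun J hJ hJ1 hJc => h4 J hJ hJ1 ((key J hJ).mp hJc)⟩

theorem isStarMaximal_iff
    {star : FractionalIdeal (nonZeroDivisors S) M → FractionalIdeal (nonZeroDivisors S) M}
    (h : IsStarOperation S M star) (Q : Ideal S) : IsStarMaximal star Q ↔ CMax (sI star) Q := by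
  have key : ∀ I : Ideal S, I ≠ ⊥ → (star (I : FractionalIdeal (nonZeroDivisors S) M) =
      (I : FractionalIdeal (nonZeroDivisors S) M) ↔ sI star I = I) := by
    intro I hI
    rw [← coe_sI h hI, FractionalIdeal.coeIdeal_inj]
  unfold IsStarMaximal CMax
  constructor
  · rintro ⟨h1, h2, h3, h4⟩
    exact ⟨h1, h2, (key _ h1).mp h3, fun J hJ hJ1 hJc => h4 J hJ hJ1 ((key J hJ).mpr hJc)⟩
  · rintro ⟨h1, h2, h3, h4⟩
    exact ⟨h1, h2, (key _ h1).mpr h3, fun J hJ hJ1 hJc => h4 J hJ hJ1 ((key J hJ).mp hJc)⟩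

theorem tSet_ssubset_iff {I : Ideal S} (hI : I ≠ ⊥) :
    tSet (I : FractionalIdeal (nonZeroDivisors S) M) ⊂
      (((1 : FractionalIdeal (nonZeroDivisors S) M) : Submodule S M) : Set M) ↔ tI I ≠ ⊤ := by
  rw [tSet_eq hI, ← FractionalIdeal.coeIdeal_top, coe_set_eq, Set.ssubset_iff_subset_ne, Ne,
    image_inj]
  exact ⟨fun h => h.2, fun h => ⟨Set.image_mono (by simp), h⟩⟩

theorem sI_IC
    {star : FractionalIdeal (nonZeroDivisors S) M → FractionalIdeal (nonZeroDivisors S) M}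
    (h : IsStarOperation S M star) (hfc : StarFiniteCharacter S M star) : IC (sI star) := by
  have hle : ∀ I : Ideal S, I ≠ ⊥ → I ≤ sI star I := by
    intro I hI s hs
    exact h.le_star _ (FractionalIdeal.coeIdeal_ne_zero.mpr hI) (algMap_mem_coe.mpr hs)
  refine ⟨hle, ?_, ?_, ?_⟩
  · intro I J hI hIJ s hs
    exact h.mono _ _ (FractionalIdeal.coeIdeal_ne_zero.mpr hI)
      (FractionalIdeal.coeIdeal_ne_zero.mpr (ne_bot_mono hI hIJ))
      ((FractionalIdeal.coeIdeal_le_coeIdeal M).mpr hIJ) hs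
  · intro I hI
    rw [← FractionalIdeal.coeIdeal_inj (K := M), coe_sI h (ne_bot_mono hI (hle I hI)), coe_sI h hI,
      h.idem _ (FractionalIdeal.coeIdeal_ne_zero.mpr hI)]
  · intro I hI s hs
    obtain ⟨J, hJ, hfg, hJI, hx⟩ := (hfc _ (FractionalIdeal.coeIdeal_ne_zero.mpr hI) _).mp hs
    obtain ⟨F, hF, hF0, rfl⟩ := exists_finset hJ hfg hJI
    exact ⟨F, hF, hF0, hx⟩

theorem sI_mul
    {star : FractionalIdeal (nonZeroDivisors S) M → FractionalIdeal (nonZeroDivisors S) M}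
    (h : IsStarOperation S M star) (I : Ideal S) (hI : I ≠ ⊥) (b : S) (hb : b ≠ 0) (s : S)
    (hs : s ∈ sI star I) : b * s ∈ sI star (Ideal.span {b} * I) := by
  rw [mem_sI, FractionalIdeal.coeIdeal_mul, FractionalIdeal.coeIdeal_span_singleton, h.smul_eq _
    (by rwa [Ne, IsFractionRing.to_map_eq_zero_iff]) _ (FractionalIdeal.coeIdeal_ne_zero.mpr hI),
    FractionalIdeal.mem_singleton_mul]
  exact ⟨_, hs, map_mul _ _ _⟩

theorem sI_le_tI
    {star : FractionalIdeal (nonZeroDivisors S) M → FractionalIdeal (nonZeroDivisors S) M}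
    (h : IsStarOperation S M star) (hfc : StarFiniteCharacter S M star) {I : Ideal S}
    (hI : I ≠ ⊥) : sI star I ≤ tI I := by
  intro s hs
  obtain ⟨F, hF, hF0, hsF⟩ := (sI_IC h hfc).fc I hI s hs
  refine (mem_tI hI).mpr ⟨F, hF, hF0, ?_⟩
  intro p q hq hd
  by_cases hp : p = 0
  · simp [hp]
  have hq' : algebraMap S M q ≠ 0 := by rwa [Ne, IsFractionRing.to_map_eq_zero_iff]
  have hp' : algebraMap S M p ≠ 0 := by rwa [Ne, IsFractionRing.to_map_eq_zero_iff]
  have hne : algebraMap S M p / algebraMap S M q ≠ 0 := div_ne_zero hp' hq'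
  have hJ0 : ((Ideal.span (F : Set S) : Ideal S) : FractionalIdeal (nonZeroDivisors S) M) ≠ 0 :=
    FractionalIdeal.coeIdeal_ne_zero.mpr (ne_bot_span hF0)
  rw [← mem_one_of_dvd (M := M) hq rfl]
  have h1 : FractionalIdeal.spanSingleton (nonZeroDivisors S)
      (algebraMap S M p / algebraMap S M q) *
      ((Ideal.span (F : Set S) : Ideal S) : FractionalIdeal (nonZeroDivisors S) M) ≤ 1 := by
    rw [FractionalIdeal.spanSingleton_mul_le_iff]
    intro z hz
    obtain ⟨a, ha, rfl⟩ := (FractionalIdeal.mem_coeIdeal _).mp hz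
    rw [mem_one_of_dvd hq rfl]
    exact VM.of_span ha p q hq hd
  have hprod : FractionalIdeal.spanSingleton (nonZeroDivisors S)
      (algebraMap S M p / algebraMap S M q) *
      ((Ideal.span (F : Set S) : Ideal S) : FractionalIdeal (nonZeroDivisors S) M) ≠ 0 := by
    obtain ⟨a, ha, ha0⟩ := hF0
    have ha' : algebraMap S M a ≠ 0 := by rwa [Ne, IsFractionRing.to_map_eq_zero_iff]
    intro h0
    have hm := FractionalIdeal.mem_singleton_mul.mpr
      ⟨_, algMap_mem_coe (M := M).mpr (Ideal.subset_span (s := (F : Set S)) ha),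
        (rfl : algebraMap S M p / algebraMap S M q * algebraMap S M a = _)⟩
    rw [h0, FractionalIdeal.mem_zero_iff] at hm
    exact mul_ne_zero hne ha' hm
  have h2 := star_le_one h hprod h1
  rw [h.smul_eq _ hne _ hJ0] at h2
  exact h2 (FractionalIdeal.mem_singleton_mul.mpr ⟨_, hsF, rfl⟩)

end bridge

theorem barStarSet_eq
    {star : FractionalIdeal (nonZeroDivisors R[X]) L → FractionalIdeal (nonZeroDivisors R[X]) L}
    (hstar : IsStarOperation R[X] L star)
    {ι : K →+* L} (hι : ∀ r : R, ι (algebraMap R K r) = algebraMap R[X] L (C r))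
    {I : Ideal R} (hI : I ≠ ⊥) :
    barStarSet star ι I =
      algebraMap R K '' ((sI star (I.map (C : R →+* R[X]))).comap (C : R →+* R[X]) : Ideal R) := by
  ext x
  simp only [barStarSet, Set.mem_ofPred_eq, Set.mem_image, SetLike.mem_coe, Ideal.mem_comap, mem_sI]
  constructor
  · intro hx
    obtain ⟨f, hf⟩ := (FractionalIdeal.mem_one_iff _).mp
      (star_le_one hstar (FractionalIdeal.coeIdeal_ne_zero.mpr (map_C_ne_bot hI))
        FractionalIdeal.coeIdeal_le_one hx)
    obtain ⟨p, q, hq, hpq⟩ := exists_frac (S := R) x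
    have hq' : algebraMap R K q ≠ 0 := by rwa [Ne, IsFractionRing.to_map_eq_zero_iff]
    have h1 : x * algebraMap R K q = algebraMap R K p := by
      rw [hpq]; field_simp
    have h2 : f * C q = C p := by
      apply IsFractionRing.injective R[X] L
      rw [map_mul, hf, ← hι, ← hι, ← map_mul, h1]
    have h3 : f.coeff 0 * q = p := by
      have := congrArg (fun g => coeff g 0) h2
      simpa using this
    have h4 : algebraMap R K (f.coeff 0) = x := by
      apply mul_right_cancel₀ hq'
      rw [h1, ← map_mul, h3]
    refine ⟨f.coeff 0, ?_, h4⟩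
    rw [← hι, h4]
    exact hx
  · rintro ⟨s, hs, rfl⟩
    rw [hι]
    exact hs

theorem isBarStarMaximal_iff
    {star : FractionalIdeal (nonZeroDivisors R[X]) L → FractionalIdeal (nonZeroDivisors R[X]) L}
    (hstar : IsStarOperation R[X] L star)
    {ι : K →+* L} (hι : ∀ r : R, ι (algebraMap R K r) = algebraMap R[X] L (C r)) (Q : Ideal R) :
    IsBarStarMaximal star ι Q ↔
      CMax (fun I : Ideal R => (sI star (I.map (C : R →+* R[X]))).comap (C : R →+* R[X])) Q := by
  have key : ∀ I : Ideal R, I ≠ ⊥ → (barStarSet star ι I = algebraMap R K '' (I : Set R) ↔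
      (sI star (I.map (C : R →+* R[X]))).comap (C : R →+* R[X]) = I) := by
    intro I hI
    rw [barStarSet_eq hstar hι hI, image_inj]
  unfold IsBarStarMaximal CMax
  constructor
  · rintro ⟨h1, h2, h3, h4⟩
    exact ⟨h1, h2, (key _ h1).mp h3, fun J hJ hJ1 hJc => h4 J hJ hJ1 ((key J hJ).mpr hJc)⟩
  · rintro ⟨h1, h2, h3, h4⟩
    exact ⟨h1, h2, (key _ h1).mpr h3, fun J hJ hJ1 hJc => h4 J hJ hJ1 ((key J hJ).mp hJc)⟩

/-- A `t`-maximal ideal of `R[X]` meeting `R` is extended from a `t`-maximal ideal of `R`. -/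
theorem tMax_extended {Q : Ideal R[X]} (hQ : CMax tI Q) (h0 : Q.comap (C : R →+* R[X]) ≠ ⊥) :
    Q = (Q.comap (C : R →+* R[X])).map (C : R →+* R[X]) ∧ CMax tI (Q.comap (C : R →+* R[X])) := by
  obtain ⟨hQ0, hQ1, hQc, hQm⟩ := hQ
  have hct : tI (contentIdeal Q) ≠ ⊤ := tI_content h0 (by rwa [hQc])
  have hle : Q.comap (C : R →+* R[X]) ≤ contentIdeal Q := by
    intro a ha
    exact Ideal.subset_span ⟨C a, ha, 0, by simp⟩
  have hc0 : contentIdeal Q ≠ ⊥ := ne_bot_mono h0 hle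
  -- `t`-maximal ideals of `R` above the content
  have hP : ∀ P : Ideal R, P ≠ ⊥ → P ≠ ⊤ → tI P = P → Q ≤ P.map (C : R →+* R[X]) →
      Q = P.map (C : R →+* R[X]) := by
    intro P hP0 hP1 hPc hQP
    refine hQm _ (map_C_ne_bot hP0) ?_ ?_ hQP
    · intro h
      apply hP1
      rw [← comap_map_C P, h, Ideal.comap_top]
    · refine le_antisymm ?_ (tI_IC.le _ (map_C_ne_bot hP0))
      have := tI_map_le hP0
      rwa [hPc] at this
  obtain ⟨P, hcP, hPmax⟩ := tI_IC.exists_max _ hc0 hct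
  have hQP : Q = P.map (C : R →+* R[X]) :=
    hP P hPmax.1 hPmax.2.1 hPmax.2.2.1 ((le_map_content Q).trans (Ideal.map_mono hcP))
  have hcm : Q.comap (C : R →+* R[X]) = P := by rw [hQP, comap_map_C]
  rw [hcm]
  exact ⟨hQP, hPmax⟩

theorem tMax_map {P : Ideal R} (hP : CMax tI P) : CMax tI (P.map (C : R →+* R[X])) := by
  obtain ⟨hP0, hP1, hPc, hPm⟩ := hP
  have h0 := map_C_ne_bot hP0
  have hc : tI (P.map (C : R →+* R[X])) = P.map (C : R →+* R[X]) := by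
    refine le_antisymm ?_ (tI_IC.le _ h0)
    have := tI_map_le hP0
    rwa [hPc] at this
  have h1 : P.map (C : R →+* R[X]) ≠ ⊤ := by
    intro h
    apply hP1
    rw [← comap_map_C P, h, Ideal.comap_top]
  obtain ⟨Q, hPQ, hQ⟩ := tI_IC.exists_max _ h0 (by rwa [hc])
  have hle : P ≤ Q.comap (C : R →+* R[X]) := Ideal.map_le_iff_le_comap.mp hPQ
  obtain ⟨hQe, hQt⟩ := tMax_extended hQ (ne_bot_mono hP0 hle)
  have := hPm _ hQt.1 hQt.2.1 hQt.2.2.1 hle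
  rw [this, ← hQe]
  exact hQ

theorem statement16
    (star : FractionalIdeal (nonZeroDivisors R[X]) L → FractionalIdeal (nonZeroDivisors R[X]) L)
    (hstar : IsStarOperation R[X] L star) (hfc : StarFiniteCharacter R[X] L star)
    (ι : K →+* L) (hι : ∀ r : R, ι (algebraMap R K r) = algebraMap R[X] L (C r)) :
    List.TFAE
      [{Q : Ideal R[X] | IsStarMaximal star Q} = {Q : Ideal R[X] | IsTMaximal L Q},
       ∀ Q : Ideal R[X], IsStarMaximal star Q → Q.comap (C : R →+* R[X]) ≠ ⊥ →
         tSet (Q : FractionalIdeal (nonZeroDivisors R[X]) L) ⊂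
           (((1 : FractionalIdeal (nonZeroDivisors R[X]) L) : Submodule R[X] L) : Set L),
       ({p : Ideal R | IsBarStarMaximal star ι p} = {p : Ideal R | IsTMaximal K p}) ∧
         ∀ Q : Ideal R[X], IsStarMaximal star Q → Q.comap (C : R →+* R[X]) ≠ ⊥ →
           Q = (Q.comap (C : R →+* R[X])).map (C : R →+* R[X])] := by
  classical
  have hs : IC (sI star) := sI_IC hstar hfc
  have hst : ∀ I : Ideal R[X], I ≠ ⊥ → sI star I ≤ tI I := fun I hI => sI_le_tI hstar hfc hI
  -- `t`-ideals are star ideals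
  have hts : ∀ I : Ideal R[X], I ≠ ⊥ → tI I = I → sI star I = I := by
    intro I hI h
    refine le_antisymm ?_ (hs.le I hI)
    have := hst I hI
    rwa [h] at this
  have hstt : ∀ Q : Ideal R[X], CMax (sI star) Q → tI Q = Q → CMax tI Q := by
    rintro Q ⟨h1, h2, _, h4⟩ hc
    exact ⟨h1, h2, hc, fun J hJ hJ1 hJc hQJ => h4 J hJ hJ1 (hts J hJ hJc) hQJ⟩
  -- a bar-star ideal above the contraction of a star-maximal ideal
  have hbar : ∀ (P J : Ideal R), P ≠ ⊥ → CMax (sI star) (P.map (C : R →+* R[X])) → J ≠ ⊤ →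
      (sI star (J.map (C : R →+* R[X]))).comap (C : R →+* R[X]) = J → P ≤ J → P = J := by
    rintro P J hP0 ⟨h1, h2, h3, h4⟩ hJ1 hJc hPJ
    have hJ0 := map_C_ne_bot (ne_bot_mono hP0 hPJ)
    have hle := hs.le _ hJ0
    have hPJ' : P.map (C : R →+* R[X]) ≤ J.map (C : R →+* R[X]) := Ideal.map_mono hPJ
    have := h4 (sI star (J.map (C : R →+* R[X]))) (ne_bot_mono hJ0 hle) (by
      intro h
      apply hJ1
      rw [← hJc, h, Ideal.comap_top]) (hs.idem _ hJ0) (hPJ'.trans hle)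
    rw [← hJc, ← this, comap_map_C]
  have hbarmax : ∀ P : Ideal R, P ≠ ⊥ → P ≠ ⊤ → CMax (sI star) (P.map (C : R →+* R[X])) →
      IsBarStarMaximal star ι P := by
    intro P hP0 hP1 hP
    rw [isBarStarMaximal_iff hstar hι]
    refine ⟨hP0, hP1, ?_, fun J _ hJ1 hJc hPJ => hbar P J hP0 hP hJ1 hJc hPJ⟩
    show (sI star (P.map (C : R →+* R[X]))).comap (C : R →+* R[X]) = P
    rw [hP.2.2.1, comap_map_C]
  tfae_have 1 → 2 := by
    intro h Q hQ _
    have hQ' : IsTMaximal L Q := by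
      have : Q ∈ {Q : Ideal R[X] | IsStarMaximal star Q} := hQ
      rw [h] at this
      exact this
    rw [isTMaximal_iff] at hQ'
    rw [tSet_ssubset_iff hQ.1, hQ'.2.2.1]
    exact hQ'.2.1
  tfae_have 2 → 1 := by
    intro h
    have hmain : ∀ Q : Ideal R[X], CMax (sI star) Q → CMax tI Q := by
      intro Q hQ
      refine hstt Q hQ ?_
      by_cases h0 : Q.comap (C : R →+* R[X]) = ⊥
      · exact tI_upper (hs.isPrime (sI_mul hstar) Q hQ) hQ.1 h0
      · have ht := h Q ((isStarMaximal_iff hstar Q).mpr hQ) h0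
        rw [tSet_ssubset_iff hQ.1] at ht
        have hle := tI_IC.le Q hQ.1
        have hne := ne_bot_mono hQ.1 hle
        exact (hQ.2.2.2 _ hne ht (hts _ hne (tI_IC.idem Q hQ.1)) hle).symm
    ext Q
    simp only [Set.mem_ofPred_eq]
    rw [isStarMaximal_iff hstar, isTMaximal_iff]
    refine ⟨hmain Q, fun hQ => ?_⟩
    obtain ⟨Q', hQQ', hQ'⟩ := hs.exists_max Q hQ.1 (by rw [hts Q hQ.1 hQ.2.2.1]; exact hQ.2.1)
    have ht := hmain Q' hQ'
    rw [hQ.2.2.2 Q' ht.1 ht.2.1 ht.2.2.1 hQQ']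
    exact hQ'
  tfae_have 1 → 3 := by
    intro h
    have hiff : ∀ Q : Ideal R[X], CMax (sI star) Q ↔ CMax tI Q := by
      intro Q
      have : Q ∈ {Q : Ideal R[X] | IsStarMaximal star Q} ↔ Q ∈ {Q : Ideal R[X] | IsTMaximal L Q} := by
        rw [h]
      simp only [Set.mem_ofPred_eq] at this
      rwa [isStarMaximal_iff hstar, isTMaximal_iff] at this
    have hTB : ∀ P : Ideal R, CMax tI P → IsBarStarMaximal star ι P := fun P hP =>
      hbarmax P hP.1 hP.2.1 ((hiff _).mpr (tMax_map hP))
    constructor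
    · ext P
      simp only [Set.mem_ofPred_eq]
      rw [isTMaximal_iff]
      refine ⟨fun hP => ?_, hTB P⟩
      rw [isBarStarMaximal_iff hstar hι] at hP
      obtain ⟨hP0, hP1, hPc, hPm⟩ := hP
      have hm0 := map_C_ne_bot hP0
      have hle := hs.le _ hm0
      obtain ⟨Q, hPQ, hQ⟩ := hs.exists_max _ hm0 (by
        intro htop
        apply hP1
        rw [← hPc]
        show (sI star (P.map (C : R →+* R[X]))).comap (C : R →+* R[X]) = ⊤
        rw [htop, Ideal.comap_top])
      have hPle : P ≤ Q.comap (C : R →+* R[X]) := Ideal.map_le_iff_le_comap.mp hPQ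
      obtain ⟨_, hQt⟩ := tMax_extended ((hiff Q).mp hQ) (ne_bot_mono hP0 hPle)
      have hb := (isBarStarMaximal_iff hstar hι _).mp (hTB _ hQt)
      rw [hPm _ hb.1 hb.2.1 hb.2.2.1 hPle]
      exact hQt
    · intro Q hQ h0
      exact (tMax_extended ((hiff Q).mp ((isStarMaximal_iff hstar Q).mp hQ)) h0).1
  tfae_have 3 → 2 := by
    rintro ⟨h1, h2⟩ Q hQ h0
    have hQe := h2 Q hQ h0
    have hQ' := (isStarMaximal_iff hstar Q).mp hQ
    have hP1 : Q.comap (C : R →+* R[X]) ≠ ⊤ := by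
      rw [Ne, Ideal.comap_eq_top_iff]
      exact hQ.2.1
    have hb : Q.comap (C : R →+* R[X]) ∈ {p : Ideal R | IsBarStarMaximal star ι p} :=
      hbarmax _ h0 hP1 (by rw [← hQe]; exact hQ')
    rw [h1] at hb
    have ht := tMax_map ((isTMaximal_iff _).mp hb)
    rw [← hQe] at ht
    rw [tSet_ssubset_iff hQ.1, ht.2.2.1]
    exact ht.2.1
  tfae_finish
end
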